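/- arXiv:2406.10992 — 3 statements merged into one kernel-verified Lean document; each statement's English description precedes it below -/
import Mathlib

section
/- Let D be a dendriform algebra, V a vector space, and Ω(D,V) an extending datum of D through V. Then the unified product D♮V is a dendriform algebra if and only if the following conditions hold for all a,b ∈ D and x,y,z ∈ V (with ⋆ := ≻+≺, ▷ := ▷₁+▷₂, ◁ := ◁₁+◁₂, ⇀ := ⇀₁+⇀₂, ↼ := ↼₁+↼₂, f := f₁+f₂, ⋆_V := ≻_V+≺_V): (D1) (V,▷₁,▷₂,◁₁,◁₂) is a D-bimodule; (D2) (a⋆b)↼₁x = a≻(b↼₁x) + a↼₁(b▷₁x), (a≺b)↼₂x = a≺(b↼x) + a↼₂(b▷x), (a≻b)↼₂x = a≻(b↼₂x) + a↼₁(b▷₂x); (D3) (x⇀a)≻b + (x◁a)⇀₁b = x⇀₁(a≻b), (x⇀₂a)≺b + (x◁₂a)⇀₂b = x⇀₂(a⋆b), (x⇀₁a)≺b + (x◁₁a)⇀₂b = x⇀₁(a≺b); (D4) (a↼x)≻b + (a▷x)⇀₁b = a≻(x⇀₁b) + a↼₁(x◁₁b), (a↼₂x)≺b + (a▷₂x)⇀₂b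 = a≺(x⇀b) + a↼₂(x◁b), (a↼₁x)≺b + (a▷₁x)⇀₂b = a≻(x⇀₂b) + a↼₁(x◁₂b); (D5) f(x,y)≻a + (x⋆_Vy)⇀₁a = x⇀₁(y⇀₁a) + f₁(x, y◁₁a), f₂(x,y)≺a + (x≺_Vy)⇀₂a = x⇀₂(y⇀a) + f₂(x, y◁a), f₁(x,y)≺a + (x≻_Vy)⇀₂a = x⇀₁(y⇀₂a) + f₁(x, y◁₂a); (D6) (x⋆_Vy)◁₁a = x◁₁(y⇀₁a) + x≻_V(y◁₁a), (x≺_Vy)◁₂a = x◁₂(y⇀a) + x≺_V(y◁a), (x≻_Vy)◁₂a = x◁₁(y⇀₂a) + x≻_V(y◁₂a); (D7) (a↼x)↼₁y + f₁(a▷x, y) = a≻f₁(x,y) + a↼₁(x≻_Vy), (a↼₂x)↼₂y + f₂(a▷₂x, y) = a≺f(x,y) + a↼₂(x⋆_Vy), (a↼₁x)↼₂y + f₂(a▷₁x, y) = a≻f₂(x,y) + a↼₁(x≺_Vy); (D8) (a↼x)▷₁y + (a▷x)≻_Vy = a▷₁(x≻_Vy), (a↼₂x)▷₂y + (a▷₂x)≺_Vy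 = a▷₂(x⋆_Vy), (a↼₁x)▷₂y + (a▷₁x)≺_Vy = a▷₁(x≺_Vy); (D9) (x⇀a)↼₁y + f₁(x◁a, y) = x⇀₁(a↼₁y) + f₁(x, a▷₁y), (x⇀₂a)↼₂y + f₂(x◁₂a, y) = x⇀₂(a↼y) + f₂(x, a▷y), (x⇀₁a)↼₂y + f₂(x◁₁a, y) = x⇀₁(a↼₂y) + f₁(x, a▷₂y); (D10) (x⇀a)▷₁y + (x◁a)≻_Vy = x◁₁(a↼₁y) + x≻_V(a▷₁y), (x⇀₂a)▷₂y + (x◁₂a)≺_Vy = x◁₂(a↼y) + x≺_V(a▷y), (x⇀₁a)▷₂y + (x◁₁a)≺_Vy = x◁₁(a↼₂y) + x≻_V(a▷₂y); (D11) f(x,y)↼₁z + f₁(x⋆_Vy, z) = x⇀₁f₁(y,z) + f₁(x, y≻_Vz), f₂(x,y)↼₂z + f₂(x≺_Vy, z) = x⇀₂f(y,z) + f₂(x, y⋆_Vz), f₁(x,y)↼₂z + f₂(x≻_Vy, z) = x⇀₁f₂(y,z) + f₁(x, y≺_Vz); (D12) f(x,y)▷₁z + (x⋆_Vy)≻_Vz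 = x◁₁f₁(y,z) + x≻_V(y≻_Vz), f₂(x,y)▷₂z + (x≺_Vy)≺_Vz = x◁₂f(y,z) + x≺_V(y⋆_Vz), f₁(x,y)▷₂z + (x≻_Vy)≺_Vz = x◁₁f₂(y,z) + x≻_V(y≺_Vz). -/
/-!
The unified product splits, and the twelve conditions are the components of three identities.

Each of the operations `⪰`, `⪯` and `⪰ + ⪯` on `D × V` is determined by seven bilinear maps, one
for each way of feeding `D` or `V` into the two slots and projecting to `D` or `V` (the component
`D × D → V` is zero, so that `D` is a subalgebra). Each of the three dendriform axioms has the shape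
`A (B u v) w = C u (E v w)`, and both sides are additive in `u`, `v` and `w`. Writing
`(a, x) = (a, 0) + (0, x)`, such an identity holds if and only if it holds when each argument lies in
`D` or in `V`. Of the eight resulting cases, `D D D` is the identity on `D` itself, and the other
seven, split into `D`- and `V`-components, give fourteen equations. This equivalence is
`ProdOp.mixedAssoc_iff`; applying it to the three axioms yields `3 * 14` equations, which are the
nine bimodule laws of (D1) together with the thirty-three equations (D2)–(D12).
-/

/- Common framework for dendriform algebras, extending structures and unified
products, over the field `ℂ`.  All operations are encoded as plain functions
together with bilinearity predicates. -/

namespace DendriformES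

section Basic

variable {M N P : Type*} [AddCommGroup M] [Module ℂ M] [AddCommGroup N] [Module ℂ N]
  [AddCommGroup P] [Module ℂ P]

/-- A map `f : M → N → P` is (ℂ-)bilinear. -/
def IsBilinear (f : M → N → P) : Prop :=
  (∀ a b y, f (a + b) y = f a y + f b y) ∧
  (∀ (c : ℂ) (a : M) (y : N), f (c • a) y = c • f a y) ∧
  (∀ a x y, f a (x + y) = f a x + f a y) ∧
  (∀ (c : ℂ) (a : M) (x : N), f a (c • x) = c • f a x)

end Basic

section Dend

variable {D V : Type*} [AddCommGroup D] [Module ℂ D] [AddCommGroup V] [Module ℂ V]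

/-- The three dendriform axioms for a pair of binary operations `s = ≻`, `p = ≺`. -/
def DendAxioms (s p : D → D → D) : Prop :=
  (∀ x y z, s (s x y + p x y) z = s x (s y z)) ∧
  (∀ x y z, p (p x y) z = p x (s y z + p y z)) ∧
  (∀ x y z, p (s x y) z = s x (p y z))

/-- `(D, s, p)` is a dendriform algebra: both operations are bilinear and the
three dendriform axioms hold. -/
def IsDendriform (s p : D → D → D) : Prop :=
  IsBilinear s ∧ IsBilinear p ∧ DendAxioms s p

/-- `(V, t1, t2)` is a left module over the dendriform algebra `(D, s, p)`. -/
def IsLeftDModule (s p : D → D → D) (t1 t2 : D → V → V) : Prop :=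
  IsBilinear t1 ∧ IsBilinear t2 ∧
  (∀ a b x, t1 (s a b + p a b) x = t1 a (t1 b x)) ∧
  (∀ a b x, t2 (p a b) x = t2 a (t1 b x + t2 b x)) ∧
  (∀ a b x, t2 (s a b) x = t1 a (t2 b x))

/-- `(V, l1, l2)` is a right module over the dendriform algebra `(D, s, p)`. -/
def IsRightDModule (s p : D → D → D) (l1 l2 : V → D → V) : Prop :=
  IsBilinear l1 ∧ IsBilinear l2 ∧
  (∀ a b x, l1 (l1 x a + l2 x a) b = l1 x (s a b)) ∧
  (∀ a b x, l2 (l2 x a) b = l2 x (s a b + p a b)) ∧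
  (∀ a b x, l2 (l1 x a) b = l1 x (p a b))

/-- `(V, t1, t2, l1, l2)` is a bimodule over the dendriform algebra `(D, s, p)`. -/
def IsDBimodule (s p : D → D → D) (t1 t2 : D → V → V) (l1 l2 : V → D → V) : Prop :=
  IsLeftDModule s p t1 t2 ∧ IsRightDModule s p l1 l2 ∧
  (∀ a b x, l1 (t1 a x + t2 a x) b = t1 a (l1 x b)) ∧
  (∀ a b x, l2 (t2 a x) b = t2 a (l1 x b + l2 x b)) ∧
  (∀ a b x, l2 (t1 a x) b = t1 a (l2 x b))

/-- A morphism of dendriform algebras: a linear map preserving both operations. -/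
def IsDendMorphism (s p : D → D → D) (s' p' : V → V → V) (φ : D → V) : Prop :=
  IsLinearMap ℂ φ ∧ (∀ x y, φ (s x y) = s' (φ x) (φ y)) ∧
    (∀ x y, φ (p x y) = p' (φ x) (φ y))

end Dend

/-- An extending datum `Ω(D,V)` of `D` through `V`: twelve maps
`tr1, tr2 = ▷₁, ▷₂ : D×V→V`, `sl1, sl2 = ◁₁, ◁₂ : V×D→V`,
`hr1, hr2 = ⇀₁, ⇀₂ : V×D→D`, `hl1, hl2 = ↼₁, ↼₂ : D×V→D`,
`cf1, cf2 = f₁, f₂ : V×V→D`, `sv, pv = ≻_V, ≺_V : V×V→V`. -/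
structure ExtendingDatum (D V : Type*) [AddCommGroup D] [Module ℂ D]
    [AddCommGroup V] [Module ℂ V] where
  tr1 : D → V → V
  tr2 : D → V → V
  sl1 : V → D → V
  sl2 : V → D → V
  hr1 : V → D → D
  hr2 : V → D → D
  hl1 : D → V → D
  hl2 : D → V → D
  cf1 : V → V → D
  cf2 : V → V → D
  sv : V → V → V
  pv : V → V → V

section Datum

variable {D V : Type*} [AddCommGroup D] [Module ℂ D] [AddCommGroup V] [Module ℂ V]

/-- All twelve maps of an extending datum are bilinear. -/
def ExtendingDatum.Bilinear (Ω : ExtendingDatum D V) : Prop :=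
  IsBilinear Ω.tr1 ∧ IsBilinear Ω.tr2 ∧ IsBilinear Ω.sl1 ∧ IsBilinear Ω.sl2 ∧
  IsBilinear Ω.hr1 ∧ IsBilinear Ω.hr2 ∧ IsBilinear Ω.hl1 ∧ IsBilinear Ω.hl2 ∧
  IsBilinear Ω.cf1 ∧ IsBilinear Ω.cf2 ∧ IsBilinear Ω.sv ∧ IsBilinear Ω.pv

/-- The operation `⪰` of the unified product `D ♮ V`. -/
def uSucc (s : D → D → D) (Ω : ExtendingDatum D V) : D × V → D × V → D × V :=
  fun u v =>
    (s u.1 v.1 + Ω.hl1 u.1 v.2 + Ω.hr1 u.2 v.1 + Ω.cf1 u.2 v.2,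
     Ω.tr1 u.1 v.2 + Ω.sl1 u.2 v.1 + Ω.sv u.2 v.2)

/-- The operation `⪯` of the unified product `D ♮ V`. -/
def uPrec (p : D → D → D) (Ω : ExtendingDatum D V) : D × V → D × V → D × V :=
  fun u v =>
    (p u.1 v.1 + Ω.hl2 u.1 v.2 + Ω.hr2 u.2 v.1 + Ω.cf2 u.2 v.2,
     Ω.tr2 u.1 v.2 + Ω.sl2 u.2 v.1 + Ω.pv u.2 v.2)

/-- An extending datum is a dendriform extending structure when the unified
product `D ♮ V` is a dendriform algebra. -/
def IsExtendingStructure (s p : D → D → D) (Ω : ExtendingDatum D V) : Prop :=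
  Ω.Bilinear ∧ IsDendriform (uSucc s Ω) (uPrec p Ω)

/-- Conditions (E1)–(E5) on a pair of linear maps `g : V → D`, `h : V → V`
relating two extending datums `Ω`, `Ω'`. -/
def ECond (s p : D → D → D) (Ω Ω' : ExtendingDatum D V) (g : V → D) (h : V → V) : Prop :=
  -- (E1)
  (∀ a x, h (Ω.tr1 a x) = Ω'.tr1 a (h x)) ∧
  (∀ a x, h (Ω.tr2 a x) = Ω'.tr2 a (h x)) ∧
  (∀ a x, h (Ω.sl1 x a) = Ω'.sl1 (h x) a) ∧
  (∀ a x, h (Ω.sl2 x a) = Ω'.sl2 (h x) a) ∧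
  -- (E2)
  (∀ a x, Ω.hr1 x a + g (Ω.sl1 x a) = s (g x) a + Ω'.hr1 (h x) a) ∧
  (∀ a x, Ω.hr2 x a + g (Ω.sl2 x a) = p (g x) a + Ω'.hr2 (h x) a) ∧
  -- (E3)
  (∀ a x, Ω.hl1 a x + g (Ω.tr1 a x) = s a (g x) + Ω'.hl1 a (h x)) ∧
  (∀ a x, Ω.hl2 a x + g (Ω.tr2 a x) = p a (g x) + Ω'.hl2 a (h x)) ∧
  -- (E4)
  (∀ x y, Ω.cf1 x y + g (Ω.sv x y) =
      s (g x) (g y) + Ω'.hl1 (g x) (h y) + Ω'.hr1 (h x) (g y) + Ω'.cf1 (h x) (h y)) ∧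
  (∀ x y, Ω.cf2 x y + g (Ω.pv x y) =
      p (g x) (g y) + Ω'.hl2 (g x) (h y) + Ω'.hr2 (h x) (g y) + Ω'.cf2 (h x) (h y)) ∧
  -- (E5)
  (∀ x y, h (Ω.sv x y) = Ω'.tr1 (g x) (h y) + Ω'.sl1 (h x) (g y) + Ω'.sv (h x) (h y)) ∧
  (∀ x y, h (Ω.pv x y) = Ω'.tr2 (g x) (h y) + Ω'.sl2 (h x) (g y) + Ω'.pv (h x) (h y))

/-- A deformation map of an extending structure `Ω(D,V)`. -/
def IsDeformationMap (s p : D → D → D) (Ω : ExtendingDatum D V) (d : V → D) : Prop :=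
  IsLinearMap ℂ d ∧
  (∀ x y, s (d x) (d y) - d (Ω.sv x y) =
      d (Ω.tr1 (d x) y + Ω.sl1 x (d y)) - Ω.hl1 (d x) y - Ω.hr1 x (d y) - Ω.cf1 x y) ∧
  (∀ x y, p (d x) (d y) - d (Ω.pv x y) =
      d (Ω.tr2 (d x) y + Ω.sl2 x (d y)) - Ω.hl2 (d x) y - Ω.hr2 x (d y) - Ω.cf2 x y)

/-- The operation `≻_d` of the deformation `V_d` of `V`. -/
def defSucc (Ω : ExtendingDatum D V) (d : V → D) : V → V → V :=
  fun x y => Ω.sv x y + Ω.tr1 (d x) y + Ω.sl1 x (d y)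

/-- The operation `≺_d` of the deformation `V_d` of `V`. -/
def defPrec (Ω : ExtendingDatum D V) (d : V → D) : V → V → V :=
  fun x y => Ω.pv x y + Ω.tr2 (d x) y + Ω.sl2 x (d y)

end Datum

section Canonical

variable {E : Type*} [AddCommGroup E] [Module ℂ E]

theorem sub_mem_ker (D : Submodule ℂ E) (ρ : E →ₗ[ℂ] E)
    (hρD : ∀ u, ρ u ∈ D) (hfix : ∀ a ∈ D, ρ a = a) (u : E) :
    u - ρ u ∈ LinearMap.ker ρ := by
  have h := hfix (ρ u) (hρD u)
  simp [LinearMap.mem_ker, map_sub, h]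

/-- The canonical extending datum of `D` through `V = ker ρ` associated to a
dendriform algebra structure `(sE, pE)` on `E` and a linear retraction
`ρ : E → D`. -/
def canonicalDatum (sE pE : E → E → E) (D : Submodule ℂ E) (ρ : E →ₗ[ℂ] E)
    (hρD : ∀ u, ρ u ∈ D) (hfix : ∀ a ∈ D, ρ a = a) :
    ExtendingDatum ↥D ↥(LinearMap.ker ρ) where
  tr1 := fun a x => ⟨sE a.1 x.1 - ρ (sE a.1 x.1), sub_mem_ker D ρ hρD hfix _⟩
  tr2 := fun a x => ⟨pE a.1 x.1 - ρ (pE a.1 x.1), sub_mem_ker D ρ hρD hfix _⟩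
  sl1 := fun x a => ⟨sE x.1 a.1 - ρ (sE x.1 a.1), sub_mem_ker D ρ hρD hfix _⟩
  sl2 := fun x a => ⟨pE x.1 a.1 - ρ (pE x.1 a.1), sub_mem_ker D ρ hρD hfix _⟩
  hr1 := fun x a => ⟨ρ (sE x.1 a.1), hρD _⟩
  hr2 := fun x a => ⟨ρ (pE x.1 a.1), hρD _⟩
  hl1 := fun a x => ⟨ρ (sE a.1 x.1), hρD _⟩
  hl2 := fun a x => ⟨ρ (pE a.1 x.1), hρD _⟩
  cf1 := fun x y => ⟨ρ (sE x.1 y.1), hρD _⟩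
  cf2 := fun x y => ⟨ρ (pE x.1 y.1), hρD _⟩
  sv := fun x y => ⟨sE x.1 y.1 - ρ (sE x.1 y.1), sub_mem_ker D ρ hρD hfix _⟩
  pv := fun x y => ⟨pE x.1 y.1 - ρ (pE x.1 y.1), sub_mem_ker D ρ hρD hfix _⟩

/-- The pair of operations on `E` associated to an extending datum of `D`
through `V = ker ρ` (the map `Υ₂`). -/
def datumToOps (D : Submodule ℂ E) (ρ : E →ₗ[ℂ] E)
    (hρD : ∀ u, ρ u ∈ D) (hfix : ∀ a ∈ D, ρ a = a) (sD pD : ↥D → ↥D → ↥D)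
    (Ω : ExtendingDatum ↥D ↥(LinearMap.ker ρ)) : (E → E → E) × (E → E → E) :=
  let dp : E → ↥D := fun u => ⟨ρ u, hρD u⟩
  let vp : E → ↥(LinearMap.ker ρ) := fun u => ⟨u - ρ u, sub_mem_ker D ρ hρD hfix u⟩
  (fun u v =>
     (sD (dp u) (dp v) : E) + (Ω.hl1 (dp u) (vp v) : E) + (Ω.hr1 (vp u) (dp v) : E)
       + (Ω.cf1 (vp u) (vp v) : E) + (Ω.tr1 (dp u) (vp v) : E) + (Ω.sl1 (vp u) (dp v) : E)
       + (Ω.sv (vp u) (vp v) : E),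
   fun u v =>
     (pD (dp u) (dp v) : E) + (Ω.hl2 (dp u) (vp v) : E) + (Ω.hr2 (vp u) (dp v) : E)
       + (Ω.cf2 (vp u) (vp v) : E) + (Ω.tr2 (dp u) (vp v) : E) + (Ω.sl2 (vp u) (dp v) : E)
       + (Ω.pv (vp u) (vp v) : E))

end Canonical

end DendriformES

namespace DendriformES

section Helpers

variable {D V : Type*} [AddCommGroup D] [Module ℂ D] [AddCommGroup V] [Module ℂ V]

section Bilinear

variable {M N P : Type*} [AddCommGroup M] [Module ℂ M] [AddCommGroup N] [Module ℂ N]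
  [AddCommGroup P] [Module ℂ P] {f g : M → N → P}

theorem IsBilinear.map_zero_left (hf : IsBilinear f) (y : N) : f 0 y = 0 := by
  simpa using hf.2.1 0 0 y

theorem IsBilinear.map_zero_right (hf : IsBilinear f) (a : M) : f a 0 = 0 := by
  simpa using hf.2.2.2 0 a 0

theorem IsBilinear.add (hf : IsBilinear f) (hg : IsBilinear g) :
    IsBilinear fun a y => f a y + g a y := by
  obtain ⟨f1, f2, f3, f4⟩ := hf
  obtain ⟨g1, g2, g3, g4⟩ := hg
  refine ⟨fun a b y => ?_, fun c a y => ?_, fun a x y => ?_, fun c a x => ?_⟩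
  · simp only [f1, g1]; abel
  · simp only [f2, g2, smul_add]
  · simp only [f3, g3]; abel
  · simp only [f4, g4, smul_add]

end Bilinear

/-- The components of an operation on `D × V` for which `D` is closed: `m : D × D → D`,
`hl : D × V → D`, `hr : V × D → D`, `cf : V × V → D`, and the `V`-valued `tr`, `sl`, `v` on
`D × V`, `V × D`, `V × V`. -/
structure ProdOp (D V : Type*) where
  m : D → D → D
  hl : D → V → D
  hr : V → D → D
  cf : V → V → D
  tr : D → V → V
  sl : V → D → V
  v : V → V → V

/-- All seven components are bilinear. -/
structure ProdOp.Bilinear (A : ProdOp D V) : Prop where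
  m : IsBilinear A.m
  hl : IsBilinear A.hl
  hr : IsBilinear A.hr
  cf : IsBilinear A.cf
  tr : IsBilinear A.tr
  sl : IsBilinear A.sl
  v : IsBilinear A.v

/-- The operation on `D × V` with the given components. -/
def ProdOp.op (A : ProdOp D V) (u w : D × V) : D × V :=
  (A.m u.1 w.1 + A.hl u.1 w.2 + A.hr u.2 w.1 + A.cf u.2 w.2,
   A.tr u.1 w.2 + A.sl u.2 w.1 + A.v u.2 w.2)

/-- The components of the pointwise sum of two operations. -/
def ProdOp.add (A B : ProdOp D V) : ProdOp D V where
  m a b := A.m a b + B.m a b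
  hl a x := A.hl a x + B.hl a x
  hr x a := A.hr x a + B.hr x a
  cf x y := A.cf x y + B.cf x y
  tr a x := A.tr a x + B.tr a x
  sl x a := A.sl x a + B.sl x a
  v x y := A.v x y + B.v x y

theorem ProdOp.add_op (A B : ProdOp D V) (u w : D × V) :
    (A.add B).op u w = A.op u w + B.op u w := by
  simp only [ProdOp.op, ProdOp.add, Prod.mk_add_mk, Prod.mk.injEq]
  constructor <;> abel

theorem ProdOp.Bilinear.add {A B : ProdOp D V} (hA : A.Bilinear) (hB : B.Bilinear) :
    (A.add B).Bilinear :=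
  ⟨hA.m.add hB.m, hA.hl.add hB.hl, hA.hr.add hB.hr, hA.cf.add hB.cf, hA.tr.add hB.tr,
    hA.sl.add hB.sl, hA.v.add hB.v⟩

theorem ProdOp.Bilinear.op {A : ProdOp D V} (hA : A.Bilinear) : IsBilinear A.op := by
  obtain ⟨⟨a1, a2, a3, a4⟩, ⟨b1, b2, b3, b4⟩, ⟨c1, c2, c3, c4⟩, ⟨d1, d2, d3, d4⟩,
    ⟨e1, e2, e3, e4⟩, ⟨f1, f2, f3, f4⟩, ⟨g1, g2, g3, g4⟩⟩ := hA
  refine ⟨fun u v w => ?_, fun c u w => ?_, fun u v w => ?_, fun c u w => ?_⟩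
  · simp only [ProdOp.op, Prod.fst_add, Prod.snd_add, a1, b1, c1, d1, e1, f1, g1,
      Prod.mk_add_mk, Prod.mk.injEq]
    constructor <;> abel
  · simp only [ProdOp.op, Prod.smul_fst, Prod.smul_snd, a2, b2, c2, d2, e2, f2, g2,
      Prod.smul_mk, smul_add]
  · simp only [ProdOp.op, Prod.fst_add, Prod.snd_add, a3, b3, c3, d3, e3, f3, g3,
      Prod.mk_add_mk, Prod.mk.injEq]
    constructor <;> abel
  · simp only [ProdOp.op, Prod.smul_fst, Prod.smul_snd, a4, b4, c4, d4, e4, f4, g4,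
      Prod.smul_mk, smul_add]

/-- The components of the identity `A (B u v) w = C u (E v w)`. The first three letters of a field
name tell where `u`, `v`, `w` lie, and the suffix tells which component of the identity is taken;
the `V`-component of the case `D D D` is trivial. -/
structure ProdOp.MixedAssoc (A B C E : ProdOp D V) : Prop where
  ddd : ∀ a b c, A.m (B.m a b) c = C.m a (E.m b c)
  ddv_D : ∀ a b x, A.hl (B.m a b) x = C.m a (E.hl b x) + C.hl a (E.tr b x)
  ddv_V : ∀ a b x, A.tr (B.m a b) x = C.tr a (E.tr b x)
  vdd_D : ∀ a b x, A.m (B.hr x a) b + A.hr (B.sl x a) b = C.hr x (E.m a b)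
  vdd_V : ∀ a b x, A.sl (B.sl x a) b = C.sl x (E.m a b)
  dvd_D : ∀ a b x, A.m (B.hl a x) b + A.hr (B.tr a x) b =
    C.m a (E.hr x b) + C.hl a (E.sl x b)
  dvd_V : ∀ a b x, A.sl (B.tr a x) b = C.tr a (E.sl x b)
  vvd_D : ∀ a x y, A.m (B.cf x y) a + A.hr (B.v x y) a =
    C.hr x (E.hr y a) + C.cf x (E.sl y a)
  vvd_V : ∀ a x y, A.sl (B.v x y) a = C.sl x (E.hr y a) + C.v x (E.sl y a)
  dvv_D : ∀ a x y, A.hl (B.hl a x) y + A.cf (B.tr a x) y =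
    C.m a (E.cf x y) + C.hl a (E.v x y)
  dvv_V : ∀ a x y, A.tr (B.hl a x) y + A.v (B.tr a x) y = C.tr a (E.v x y)
  vdv_D : ∀ a x y, A.hl (B.hr x a) y + A.cf (B.sl x a) y =
    C.hr x (E.hl a y) + C.cf x (E.tr a y)
  vdv_V : ∀ a x y, A.tr (B.hr x a) y + A.v (B.sl x a) y =
    C.sl x (E.hl a y) + C.v x (E.tr a y)
  vvv_D : ∀ x y z, A.hl (B.cf x y) z + A.cf (B.v x y) z =
    C.hr x (E.cf y z) + C.cf x (E.v y z)
  vvv_V : ∀ x y z, A.tr (B.cf x y) z + A.v (B.v x y) z =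
    C.sl x (E.cf y z) + C.v x (E.v y z)

/-- By additivity, an identity `A (B u v) w = C u (E v w)` on `D × V` is equivalent to its
components on arguments lying in `D` or in `V`. -/
theorem ProdOp.mixedAssoc_iff {A B C E : ProdOp D V} (hA : A.Bilinear) (hB : B.Bilinear)
    (hC : C.Bilinear) (hE : E.Bilinear) :
    (∀ u v w, A.op (B.op u v) w = C.op u (E.op v w)) ↔ ProdOp.MixedAssoc A B C E := by
  -- The operations evaluated on `D × 0` and `0 × V`.
  have dd {F : ProdOp D V} (hF : F.Bilinear) (a b : D) :
      F.op (a, 0) (b, 0) = (F.m a b, 0) := by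
    simp [ProdOp.op, hF.hl.map_zero_right, hF.hr.map_zero_left, hF.cf.map_zero_left,
      hF.tr.map_zero_right, hF.sl.map_zero_left, hF.v.map_zero_left]
  have dv {F : ProdOp D V} (hF : F.Bilinear) (a : D) (x : V) :
      F.op (a, 0) (0, x) = (F.hl a x, F.tr a x) := by
    simp [ProdOp.op, hF.m.map_zero_right, hF.hr.map_zero_left, hF.cf.map_zero_left,
      hF.sl.map_zero_left, hF.v.map_zero_left]
  have vd {F : ProdOp D V} (hF : F.Bilinear) (x : V) (a : D) :
      F.op (0, x) (a, 0) = (F.hr x a, F.sl x a) := by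
    simp [ProdOp.op, hF.m.map_zero_left, hF.hl.map_zero_left, hF.cf.map_zero_right,
      hF.tr.map_zero_left, hF.v.map_zero_right]
  have vv {F : ProdOp D V} (hF : F.Bilinear) (x y : V) :
      F.op (0, x) (0, y) = (F.cf x y, F.v x y) := by
    simp [ProdOp.op, hF.m.map_zero_left, hF.hl.map_zero_left, hF.hr.map_zero_right,
      hF.tr.map_zero_left, hF.sl.map_zero_right]
  -- The operations with one argument in `D × 0` or `0 × V` and the other arbitrary.
  have pd {F : ProdOp D V} (hF : F.Bilinear) (a b : D) (x : V) :
      F.op (a, x) (b, 0) = (F.m a b + F.hr x b, F.sl x b) := by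
    simp [ProdOp.op, hF.hl.map_zero_right, hF.cf.map_zero_right,
      hF.tr.map_zero_right, hF.v.map_zero_right]
  have pv {F : ProdOp D V} (hF : F.Bilinear) (a : D) (x y : V) :
      F.op (a, x) (0, y) = (F.hl a y + F.cf x y, F.tr a y + F.v x y) := by
    simp [ProdOp.op, hF.m.map_zero_right, hF.hr.map_zero_right, hF.sl.map_zero_right]
  have dp {F : ProdOp D V} (hF : F.Bilinear) (a b : D) (x : V) :
      F.op (a, 0) (b, x) = (F.m a b + F.hl a x, F.tr a x) := by
    simp [ProdOp.op, hF.hr.map_zero_left, hF.cf.map_zero_left,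
      hF.sl.map_zero_left, hF.v.map_zero_left]
  have vp {F : ProdOp D V} (hF : F.Bilinear) (x : V) (a : D) (y : V) :
      F.op (0, x) (a, y) = (F.hr x a + F.cf x y, F.sl x a + F.v x y) := by
    simp [ProdOp.op, hF.m.map_zero_left, hF.hl.map_zero_left, hF.tr.map_zero_left]
  constructor
  · intro h
    have hddd := fun a b c => h (a, 0) (b, 0) (c, 0)
    have hddv := fun a b x => h (a, 0) (b, 0) (0, x)
    have hvdd := fun a b x => h (0, x) (a, 0) (b, 0)
    have hdvd := fun a b x => h (a, 0) (0, x) (b, 0)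
    have hvvd := fun a x y => h (0, x) (0, y) (a, 0)
    have hdvv := fun a x y => h (a, 0) (0, x) (0, y)
    have hvdv := fun a x y => h (0, x) (a, 0) (0, y)
    have hvvv := fun x y z => h (0, x) (0, y) (0, z)
    simp only [dd hA, dd hB, dd hC, dd hE, Prod.mk.injEq] at hddd
    simp only [dd hB, dv hA, dv hE, dp hC, Prod.mk.injEq] at hddv
    simp only [vd hB, pd hA, dd hE, vd hC, Prod.mk.injEq] at hvdd
    simp only [dv hB, pd hA, vd hE, dp hC, Prod.mk.injEq] at hdvd
    simp only [vv hB, pd hA, vd hE, vp hC, Prod.mk.injEq] at hvvd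
    simp only [dv hB, pv hA, vv hE, dp hC, Prod.mk.injEq] at hdvv
    simp only [vd hB, pv hA, dv hE, vp hC, Prod.mk.injEq] at hvdv
    simp only [vv hB, pv hA, vv hE, vp hC, Prod.mk.injEq] at hvvv
    exact ⟨fun a b c => (hddd a b c).1,
      fun a b x => (hddv a b x).1, fun a b x => (hddv a b x).2,
      fun a b x => (hvdd a b x).1, fun a b x => (hvdd a b x).2,
      fun a b x => (hdvd a b x).1, fun a b x => (hdvd a b x).2,
      fun a x y => (hvvd a x y).1, fun a x y => (hvvd a x y).2,
      fun a x y => (hdvv a x y).1, fun a x y => (hdvv a x y).2,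
      fun a x y => (hvdv a x y).1, fun a x y => (hvdv a x y).2,
      fun x y z => (hvvv x y z).1, fun x y z => (hvvv x y z).2⟩
  · rintro h ⟨a, x⟩ ⟨b, y⟩ ⟨c, z⟩
    have split (d : D) (t : V) : (d, t) = ((d, 0) : D × V) + (0, t) := by simp
    have hddd : A.op (B.op (a, 0) (b, 0)) (c, 0) = C.op (a, 0) (E.op (b, 0) (c, 0)) := by
      simp only [dd hA, dd hB, dd hC, dd hE, h.ddd]
    have hddv : A.op (B.op (a, 0) (b, 0)) (0, z) = C.op (a, 0) (E.op (b, 0) (0, z)) := by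
      simp only [dd hB, dv hA, dv hE, dp hC, h.ddv_D, h.ddv_V]
    have hvdd : A.op (B.op (0, x) (b, 0)) (c, 0) = C.op (0, x) (E.op (b, 0) (c, 0)) := by
      simp only [vd hB, pd hA, dd hE, vd hC, h.vdd_D, h.vdd_V]
    have hdvd : A.op (B.op (a, 0) (0, y)) (c, 0) = C.op (a, 0) (E.op (0, y) (c, 0)) := by
      simp only [dv hB, pd hA, vd hE, dp hC, h.dvd_D, h.dvd_V]
    have hvvd : A.op (B.op (0, x) (0, y)) (c, 0) = C.op (0, x) (E.op (0, y) (c, 0)) := by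
      simp only [vv hB, pd hA, vd hE, vp hC, h.vvd_D, h.vvd_V]
    have hdvv : A.op (B.op (a, 0) (0, y)) (0, z) = C.op (a, 0) (E.op (0, y) (0, z)) := by
      simp only [dv hB, pv hA, vv hE, dp hC, h.dvv_D, h.dvv_V]
    have hvdv : A.op (B.op (0, x) (b, 0)) (0, z) = C.op (0, x) (E.op (b, 0) (0, z)) := by
      simp only [vd hB, pv hA, dv hE, vp hC, h.vdv_D, h.vdv_V]
    have hvvv : A.op (B.op (0, x) (0, y)) (0, z) = C.op (0, x) (E.op (0, y) (0, z)) := by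
      simp only [vv hB, pv hA, vv hE, vp hC, h.vvv_D, h.vvv_V]
    rw [split a x, split b y, split c z]
    simp only [hA.op.1, hA.op.2.2.1, hB.op.1, hB.op.2.2.1, hC.op.1, hC.op.2.2.1, hE.op.1,
      hE.op.2.2.1, hddd, hddv, hvdd, hdvd, hvvd, hdvv, hvdv, hvvv]

/-- The components of `⪰` on the unified product. -/
def succOp (s : D → D → D) (Ω : ExtendingDatum D V) : ProdOp D V :=
  ⟨s, Ω.hl1, Ω.hr1, Ω.cf1, Ω.tr1, Ω.sl1, Ω.sv⟩

/-- The components of `⪯` on the unified product. -/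
def precOp (p : D → D → D) (Ω : ExtendingDatum D V) : ProdOp D V :=
  ⟨p, Ω.hl2, Ω.hr2, Ω.cf2, Ω.tr2, Ω.sl2, Ω.pv⟩

/-- The instances of `A (B u v) w = C u (E v w)` are the three dendriform axioms: the sum `⪰ + ⪯`
is the inner operation on the left in the first axiom, and on the right in the second. -/
theorem isDendriform_unified_iff {s p : D → D → D} {Ω : ExtendingDatum D V}
    (hS : (succOp s Ω).Bilinear) (hP : (precOp p Ω).Bilinear) :
    IsDendriform (uSucc s Ω) (uPrec p Ω) ↔
      ((succOp s Ω).MixedAssoc ((succOp s Ω).add (precOp p Ω)) (succOp s Ω) (succOp s Ω) ∧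
      (precOp p Ω).MixedAssoc (precOp p Ω) (precOp p Ω) ((succOp s Ω).add (precOp p Ω)) ∧
      (precOp p Ω).MixedAssoc (succOp s Ω) (succOp s Ω) (precOp p Ω)) := by
  rw [← ProdOp.mixedAssoc_iff hS (hS.add hP) hS hS, ← ProdOp.mixedAssoc_iff hP hP hP (hS.add hP),
    ← ProdOp.mixedAssoc_iff hP hS hS hP]
  simp only [ProdOp.add_op]
  exact ⟨fun h => h.2.2, fun h => ⟨hS.op, hP.op, h⟩⟩

end Helpers

/-- an extending datum `Ω(D,V)` makes the unified product `D ♮ V`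
a dendriform algebra if and only if conditions (D1)–(D12) hold. -/
theorem unifiedProduct_isDendriform_iff {D V : Type*}
    [AddCommGroup D] [Module ℂ D] [AddCommGroup V] [Module ℂ V]
    (s p : D → D → D) (hD : IsDendriform s p)
    (Ω : ExtendingDatum D V) (hbil : Ω.Bilinear) :
    IsDendriform (uSucc s Ω) (uPrec p Ω) ↔
      -- (D1)
      (IsDBimodule s p Ω.tr1 Ω.tr2 Ω.sl1 Ω.sl2 ∧
      -- (D2)
      (∀ a b x, Ω.hl1 (s a b + p a b) x = s a (Ω.hl1 b x) + Ω.hl1 a (Ω.tr1 b x)) ∧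
      (∀ a b x, Ω.hl2 (p a b) x =
        p a (Ω.hl1 b x + Ω.hl2 b x) + Ω.hl2 a (Ω.tr1 b x + Ω.tr2 b x)) ∧
      (∀ a b x, Ω.hl2 (s a b) x = s a (Ω.hl2 b x) + Ω.hl1 a (Ω.tr2 b x)) ∧
      -- (D3)
      (∀ a b x, s (Ω.hr1 x a + Ω.hr2 x a) b + Ω.hr1 (Ω.sl1 x a + Ω.sl2 x a) b =
        Ω.hr1 x (s a b)) ∧
      (∀ a b x, p (Ω.hr2 x a) b + Ω.hr2 (Ω.sl2 x a) b = Ω.hr2 x (s a b + p a b)) ∧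
      (∀ a b x, p (Ω.hr1 x a) b + Ω.hr2 (Ω.sl1 x a) b = Ω.hr1 x (p a b)) ∧
      -- (D4)
      (∀ a b x, s (Ω.hl1 a x + Ω.hl2 a x) b + Ω.hr1 (Ω.tr1 a x + Ω.tr2 a x) b =
        s a (Ω.hr1 x b) + Ω.hl1 a (Ω.sl1 x b)) ∧
      (∀ a b x, p (Ω.hl2 a x) b + Ω.hr2 (Ω.tr2 a x) b =
        p a (Ω.hr1 x b + Ω.hr2 x b) + Ω.hl2 a (Ω.sl1 x b + Ω.sl2 x b)) ∧
      (∀ a b x, p (Ω.hl1 a x) b + Ω.hr2 (Ω.tr1 a x) b =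
        s a (Ω.hr2 x b) + Ω.hl1 a (Ω.sl2 x b)) ∧
      -- (D5)
      (∀ a x y, s (Ω.cf1 x y + Ω.cf2 x y) a + Ω.hr1 (Ω.sv x y + Ω.pv x y) a =
        Ω.hr1 x (Ω.hr1 y a) + Ω.cf1 x (Ω.sl1 y a)) ∧
      (∀ a x y, p (Ω.cf2 x y) a + Ω.hr2 (Ω.pv x y) a =
        Ω.hr2 x (Ω.hr1 y a + Ω.hr2 y a) + Ω.cf2 x (Ω.sl1 y a + Ω.sl2 y a)) ∧
      (∀ a x y, p (Ω.cf1 x y) a + Ω.hr2 (Ω.sv x y) a =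
        Ω.hr1 x (Ω.hr2 y a) + Ω.cf1 x (Ω.sl2 y a)) ∧
      -- (D6)
      (∀ a x y, Ω.sl1 (Ω.sv x y + Ω.pv x y) a =
        Ω.sl1 x (Ω.hr1 y a) + Ω.sv x (Ω.sl1 y a)) ∧
      (∀ a x y, Ω.sl2 (Ω.pv x y) a =
        Ω.sl2 x (Ω.hr1 y a + Ω.hr2 y a) + Ω.pv x (Ω.sl1 y a + Ω.sl2 y a)) ∧
      (∀ a x y, Ω.sl2 (Ω.sv x y) a = Ω.sl1 x (Ω.hr2 y a) + Ω.sv x (Ω.sl2 y a)) ∧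
      -- (D7)
      (∀ a x y, Ω.hl1 (Ω.hl1 a x + Ω.hl2 a x) y + Ω.cf1 (Ω.tr1 a x + Ω.tr2 a x) y =
        s a (Ω.cf1 x y) + Ω.hl1 a (Ω.sv x y)) ∧
      (∀ a x y, Ω.hl2 (Ω.hl2 a x) y + Ω.cf2 (Ω.tr2 a x) y =
        p a (Ω.cf1 x y + Ω.cf2 x y) + Ω.hl2 a (Ω.sv x y + Ω.pv x y)) ∧
      (∀ a x y, Ω.hl2 (Ω.hl1 a x) y + Ω.cf2 (Ω.tr1 a x) y =
        s a (Ω.cf2 x y) + Ω.hl1 a (Ω.pv x y)) ∧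
      -- (D8)
      (∀ a x y, Ω.tr1 (Ω.hl1 a x + Ω.hl2 a x) y + Ω.sv (Ω.tr1 a x + Ω.tr2 a x) y =
        Ω.tr1 a (Ω.sv x y)) ∧
      (∀ a x y, Ω.tr2 (Ω.hl2 a x) y + Ω.pv (Ω.tr2 a x) y =
        Ω.tr2 a (Ω.sv x y + Ω.pv x y)) ∧
      (∀ a x y, Ω.tr2 (Ω.hl1 a x) y + Ω.pv (Ω.tr1 a x) y = Ω.tr1 a (Ω.pv x y)) ∧
      -- (D9)
      (∀ a x y, Ω.hl1 (Ω.hr1 x a + Ω.hr2 x a) y + Ω.cf1 (Ω.sl1 x a + Ω.sl2 x a) y =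
        Ω.hr1 x (Ω.hl1 a y) + Ω.cf1 x (Ω.tr1 a y)) ∧
      (∀ a x y, Ω.hl2 (Ω.hr2 x a) y + Ω.cf2 (Ω.sl2 x a) y =
        Ω.hr2 x (Ω.hl1 a y + Ω.hl2 a y) + Ω.cf2 x (Ω.tr1 a y + Ω.tr2 a y)) ∧
      (∀ a x y, Ω.hl2 (Ω.hr1 x a) y + Ω.cf2 (Ω.sl1 x a) y =
        Ω.hr1 x (Ω.hl2 a y) + Ω.cf1 x (Ω.tr2 a y)) ∧
      -- (D10)
      (∀ a x y, Ω.tr1 (Ω.hr1 x a + Ω.hr2 x a) y + Ω.sv (Ω.sl1 x a + Ω.sl2 x a) y =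
        Ω.sl1 x (Ω.hl1 a y) + Ω.sv x (Ω.tr1 a y)) ∧
      (∀ a x y, Ω.tr2 (Ω.hr2 x a) y + Ω.pv (Ω.sl2 x a) y =
        Ω.sl2 x (Ω.hl1 a y + Ω.hl2 a y) + Ω.pv x (Ω.tr1 a y + Ω.tr2 a y)) ∧
      (∀ a x y, Ω.tr2 (Ω.hr1 x a) y + Ω.pv (Ω.sl1 x a) y =
        Ω.sl1 x (Ω.hl2 a y) + Ω.sv x (Ω.tr2 a y)) ∧
      -- (D11)
      (∀ x y z, Ω.hl1 (Ω.cf1 x y + Ω.cf2 x y) z + Ω.cf1 (Ω.sv x y + Ω.pv x y) z =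
        Ω.hr1 x (Ω.cf1 y z) + Ω.cf1 x (Ω.sv y z)) ∧
      (∀ x y z, Ω.hl2 (Ω.cf2 x y) z + Ω.cf2 (Ω.pv x y) z =
        Ω.hr2 x (Ω.cf1 y z + Ω.cf2 y z) + Ω.cf2 x (Ω.sv y z + Ω.pv y z)) ∧
      (∀ x y z, Ω.hl2 (Ω.cf1 x y) z + Ω.cf2 (Ω.sv x y) z =
        Ω.hr1 x (Ω.cf2 y z) + Ω.cf1 x (Ω.pv y z)) ∧
      -- (D12)
      (∀ x y z, Ω.tr1 (Ω.cf1 x y + Ω.cf2 x y) z + Ω.sv (Ω.sv x y + Ω.pv x y) z =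
        Ω.sl1 x (Ω.cf1 y z) + Ω.sv x (Ω.sv y z)) ∧
      (∀ x y z, Ω.tr2 (Ω.cf2 x y) z + Ω.pv (Ω.pv x y) z =
        Ω.sl2 x (Ω.cf1 y z + Ω.cf2 y z) + Ω.pv x (Ω.sv y z + Ω.pv y z)) ∧
      (∀ x y z, Ω.tr2 (Ω.cf1 x y) z + Ω.pv (Ω.sv x y) z =
        Ω.sl1 x (Ω.cf2 y z) + Ω.sv x (Ω.pv y z))) := by
  obtain ⟨bs, bp, d1, d2, d3⟩ := hD
  obtain ⟨b1, b2, b3, b4, b5, b6, b7, b8, b9, b10, b11, b12⟩ := hbil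
  rw [isDendriform_unified_iff (Ω := Ω) ⟨bs, b7, b5, b9, b1, b3, b11⟩
    ⟨bp, b8, b6, b10, b2, b4, b12⟩]
  constructor
  · rintro ⟨h1, h2, h3⟩
    exact ⟨⟨⟨b1, b2, h1.ddv_V, h2.ddv_V, h3.ddv_V⟩, ⟨b3, b4, h1.vdd_V, h2.vdd_V, h3.vdd_V⟩,
      h1.dvd_V, h2.dvd_V, h3.dvd_V⟩,
      h1.ddv_D, h2.ddv_D, h3.ddv_D,
      h1.vdd_D, h2.vdd_D, h3.vdd_D,
      h1.dvd_D, h2.dvd_D, h3.dvd_D,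
      h1.vvd_D, h2.vvd_D, h3.vvd_D,
      h1.vvd_V, h2.vvd_V, h3.vvd_V,
      h1.dvv_D, h2.dvv_D, h3.dvv_D,
      h1.dvv_V, h2.dvv_V, h3.dvv_V,
      h1.vdv_D, h2.vdv_D, h3.vdv_D,
      h1.vdv_V, h2.vdv_V, h3.vdv_V,
      h1.vvv_D, h2.vvv_D, h3.vvv_D,
      h1.vvv_V, h2.vvv_V, h3.vvv_V⟩
  · rintro ⟨⟨⟨-, -, ddv_V1, ddv_V2, ddv_V3⟩, ⟨-, -, vdd_V1, vdd_V2, vdd_V3⟩,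
      dvd_V1, dvd_V2, dvd_V3⟩,
      ddv_D1, ddv_D2, ddv_D3,
      vdd_D1, vdd_D2, vdd_D3,
      dvd_D1, dvd_D2, dvd_D3,
      vvd_D1, vvd_D2, vvd_D3,
      vvd_V1, vvd_V2, vvd_V3,
      dvv_D1, dvv_D2, dvv_D3,
      dvv_V1, dvv_V2, dvv_V3,
      vdv_D1, vdv_D2, vdv_D3,
      vdv_V1, vdv_V2, vdv_V3,
      vvv_D1, vvv_D2, vvv_D3,
      vvv_V1, vvv_V2, vvv_V3⟩
    exact ⟨⟨d1, ddv_D1, ddv_V1, vdd_D1, vdd_V1, dvd_D1, dvd_V1, vvd_D1,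
        vvd_V1, dvv_D1, dvv_V1, vdv_D1, vdv_V1, vvv_D1, vvv_V1⟩,
      ⟨d2, ddv_D2, ddv_V2, vdd_D2, vdd_V2, dvd_D2, dvd_V2, vvd_D2,
        vvd_V2, dvv_D2, dvv_V2, vdv_D2, vdv_V2, vvv_D2, vvv_V2⟩,
      ⟨d3, ddv_D3, ddv_V3, vdd_D3, vdd_V3, dvd_D3, dvd_V3, vvd_D3,
        vvd_V3, dvv_D3, dvv_V3, vdv_D3, vdv_V3, vvv_D3, vvv_V3⟩⟩

end DendriformES
end

section
/- Let D be a subalgebra of a dendriform algebra (E,≻_E,≺_E), let ρ : E → D be a linear map with ρ(a) = a for all a ∈ D, and let V := ker ρ. Then the canonical extending datum of D through V defined by ρ is a dendriform extending structure (i.e., the unified product D♮V built from it is a dendriform algebra), and the linear map φ : D♮V → E, φ(a,x) = a + x, is an isomorphism of dendriform algebras which stabilizes D and co-stabilizes V, i.e., φ(a,0) = a for all a ∈ D and φ(a,x) − ρ(φ(a,x)) = x for all a ∈ D, x ∈ V. -/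
namespace DendriformES

section Helpers

variable {E F : Type*} [AddCommGroup E] [Module ℂ E] [AddCommGroup F] [Module ℂ F]

/-- Restricting a bilinear operation of `E` to two submodules and following it by a linear map
that lands in a third one is bilinear. Each map of the canonical datum has this form, the linear
map being `ρ` or `id - ρ`. -/
theorem IsBilinear.restrict {f : E → E → E} (hf : IsBilinear f) (S T U : Submodule ℂ E)
    (L : E →ₗ[ℂ] E) (hL : ∀ u, L u ∈ U) :
    IsBilinear (fun (a : S) (b : T) => (⟨L (f a.1 b.1), hL _⟩ : U)) := by
  obtain ⟨h1, h2, h3, h4⟩ := hf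
  refine ⟨fun a b y => ?_, fun c a y => ?_, fun a x y => ?_, fun c a x => ?_⟩ <;>
    apply Subtype.ext <;> simp [h1, h2, h3, h4]

/-- An operation that an injective linear map intertwines with a bilinear one is bilinear. -/
theorem IsBilinear.of_injective {f : E → E → E} (hf : IsBilinear f) {g : F → F → F}
    {φ : F → E} (hφ : IsLinearMap ℂ φ) (hinj : Function.Injective φ)
    (hg : ∀ u v, φ (g u v) = f (φ u) (φ v)) : IsBilinear g := by
  obtain ⟨h1, h2, h3, h4⟩ := hf
  refine ⟨fun a b y => ?_, fun c a y => ?_, fun a x y => ?_, fun c a x => ?_⟩ <;>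
    apply hinj <;> simp only [hφ.map_add, hφ.map_smul, hg, h1, h2, h3, h4]

/-- A pair of operations that an injective linear map intertwines with a dendriform structure is
itself dendriform. -/
theorem IsDendriform.of_injective {s p : E → E → E} (h : IsDendriform s p) {s' p' : F → F → F}
    {φ : F → E} (hφ : IsLinearMap ℂ φ) (hinj : Function.Injective φ)
    (hs : ∀ u v, φ (s' u v) = s (φ u) (φ v)) (hp : ∀ u v, φ (p' u v) = p (φ u) (φ v)) :
    IsDendriform s' p' := by
  obtain ⟨bs, bp, h1, h2, h3⟩ := h
  refine ⟨bs.of_injective hφ hinj hs, bp.of_injective hφ hinj hp,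
    fun x y z => ?_, fun x y z => ?_, fun x y z => ?_⟩ <;>
    apply hinj <;> simp only [hφ.map_add, hs, hp, h1, h2, h3]

theorem IsBilinear.map_add_add {f : E → E → E} (hf : IsBilinear f) (a x b y : E) :
    f (a + x) (b + y) = f a b + f a y + f x b + f x y := by
  obtain ⟨h1, -, h3, -⟩ := hf
  rw [h1, h3, h3]
  abel

end Helpers

/-- for an extension `D ⊂ E` of dendriform algebras with a linear
retraction `ρ : E → D` and `V = ker ρ`, the canonical extending datum is a
dendriform extending structure, and `φ(a,x) = a + x` is an isomorphism of
dendriform algebras `D ♮ V → E` which stabilizes `D` and co-stabilizes `V`. -/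
theorem canonicalDatum_isExtendingStructure {E : Type*} [AddCommGroup E] [Module ℂ E]
    (sE pE : E → E → E) (hE : IsDendriform sE pE)
    (D : Submodule ℂ E)
    (hDs : ∀ a b, a ∈ D → b ∈ D → sE a b ∈ D)
    (hDp : ∀ a b, a ∈ D → b ∈ D → pE a b ∈ D)
    (ρ : E →ₗ[ℂ] E) (hρD : ∀ u, ρ u ∈ D) (hfix : ∀ a ∈ D, ρ a = a) :
    let sD : ↥D → ↥D → ↥D := fun a b => ⟨sE a.1 b.1, hDs _ _ a.2 b.2⟩
    let pD : ↥D → ↥D → ↥D := fun a b => ⟨pE a.1 b.1, hDp _ _ a.2 b.2⟩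
    let Ω := canonicalDatum sE pE D ρ hρD hfix
    let φ : ↥D × ↥(LinearMap.ker ρ) → E := fun u => u.1.1 + u.2.1
    IsExtendingStructure sD pD Ω ∧
    IsLinearMap ℂ φ ∧ Function.Bijective φ ∧
    (∀ u v, φ (uSucc sD Ω u v) = sE (φ u) (φ v)) ∧
    (∀ u v, φ (uPrec pD Ω u v) = pE (φ u) (φ v)) ∧
    (∀ a : ↥D, φ (a, 0) = a.1) ∧
    (∀ u : ↥D × ↥(LinearMap.ker ρ), φ u - ρ (φ u) = u.2.1) := by
  intro sD pD Ω φ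
  have bs := hE.1
  have bp := hE.2.1
  have hV : ∀ u, ((LinearMap.id : E →ₗ[ℂ] E) - ρ) u ∈ LinearMap.ker ρ :=
    fun u => sub_mem_ker D ρ hρD hfix u
  have hlin : IsLinearMap ℂ φ := by
    refine ⟨fun u v => ?_, fun c u => ?_⟩
    · simp only [φ, Prod.fst_add, Prod.snd_add, Submodule.coe_add]
      abel
    · simp only [φ, Prod.smul_fst, Prod.smul_snd, Submodule.coe_smul, smul_add]
  have hρφ : ∀ u, ρ (φ u) = u.1.1 := fun u => by
    simp only [φ, map_add, hfix _ u.1.2, LinearMap.mem_ker.1 u.2.2, add_zero]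
  have hco : ∀ u, φ u - ρ (φ u) = u.2.1 := fun u => by
    rw [hρφ]
    exact add_sub_cancel_left _ _
  have hinj : Function.Injective φ := fun u v huv =>
    Prod.ext (Subtype.ext (by rw [← hρφ u, ← hρφ v, huv]))
      (Subtype.ext (by rw [← hco u, ← hco v, huv]))
  have hsurj : Function.Surjective φ := fun e =>
    ⟨(⟨ρ e, hρD e⟩, ⟨e - ρ e, sub_mem_ker D ρ hρD hfix e⟩), add_sub_cancel _ _⟩
  have hs : ∀ u v, φ (uSucc sD Ω u v) = sE (φ u) (φ v) := fun u v => by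
    simp only [φ, uSucc, sD, Ω, canonicalDatum, Submodule.coe_add, bs.map_add_add]
    abel
  have hp : ∀ u v, φ (uPrec pD Ω u v) = pE (φ u) (φ v) := fun u v => by
    simp only [φ, uPrec, pD, Ω, canonicalDatum, Submodule.coe_add, bp.map_add_add]
    abel
  refine ⟨⟨?_, hE.of_injective hlin hinj hs hp⟩, hlin, ⟨hinj, hsurj⟩, hs, hp,
    fun a => add_zero _, hco⟩
  exact ⟨bs.restrict _ _ _ _ hV, bp.restrict _ _ _ _ hV, bs.restrict _ _ _ _ hV,
    bp.restrict _ _ _ _ hV, bs.restrict _ _ _ _ hρD, bp.restrict _ _ _ _ hρD,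
    bs.restrict _ _ _ _ hρD, bp.restrict _ _ _ _ hρD, bs.restrict _ _ _ _ hρD,
    bp.restrict _ _ _ _ hρD, bs.restrict _ _ _ _ hV, bp.restrict _ _ _ _ hV⟩

end DendriformES
end

section
/- Let D be a dendriform algebra, E a vector space containing D as a subspace, ρ : E → D a linear map with ρ(a) = a for all a ∈ D, and V := ker ρ. Let Exts(E,D) denote the set of dendriform algebra structures (≻_E,≺_E) on E containing D as a subalgebra (≻_E|_{D×D} = ≻, ≺_E|_{D×D} = ≺), and let O(D,V) denote the set of dendriform extending structures of D through V. Then the map Υ₁ : Exts(E,D) → O(D,V) sending (≻_E,≺_E) to its canonical extending datum, and the map Υ₂ : O(D,V) → Exts(E,D) sending Ω(D,V) to the operations defined for a,b ∈ D, x,y ∈ V by (a+x)≻_E(b+y) := a≻b + a↼₁y + x⇀₁b + f₁(x,y) + a▷₁y + x◁₁b + x≻_Vy and (a+x)≺_E(b+y) := a≺b + a↼₂y + x⇀₂b + f₂(x,y) + a▷₂y + x◁₂b + x≺_Vy, are well defined and mutually inverse bijections. -/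
namespace DendriformES

/-! ### Transport of bilinear maps and dendriform structures -/

section Transport

variable {M N P M' N' P' : Type*} [AddCommGroup M] [Module ℂ M] [AddCommGroup N] [Module ℂ N]
  [AddCommGroup P] [Module ℂ P] [AddCommGroup M'] [Module ℂ M'] [AddCommGroup N'] [Module ℂ N']
  [AddCommGroup P'] [Module ℂ P']

theorem IsBilinear.zero_left {f : M → N → P} (h : IsBilinear f) (y : N) : f 0 y = 0 := by
  simpa using h.2.1 0 0 y

theorem IsBilinear.zero_right {f : M → N → P} (h : IsBilinear f) (x : M) : f x 0 = 0 := by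
  simpa using h.2.2.2 0 x 0

theorem IsBilinear.comp {f : M → N → P} (h : IsBilinear f) (l : P →ₗ[ℂ] P') (i : M' →ₗ[ℂ] M)
    (j : N' →ₗ[ℂ] N) : IsBilinear (fun x y => l (f (i x) (j y))) := by
  obtain ⟨h1, h2, h3, h4⟩ := h
  refine ⟨?_, ?_, ?_, ?_⟩ <;> intros <;> simp [h1, h2, h3, h4]

/-- A dendriform structure passes along a linear equivalence compatible with the operations. -/
theorem IsDendriform.transport {s p : M → M → M} {s' p' : N → N → N} (h : IsDendriform s p)
    (e : M ≃ₗ[ℂ] N) (hs : ∀ x y, e (s x y) = s' (e x) (e y))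
    (hp : ∀ x y, e (p x y) = p' (e x) (e y)) : IsDendriform s' p' := by
  have es : s' = fun x y => e (s (e.symm x) (e.symm y)) := by
    funext x y; simp [hs]
  have ep : p' = fun x y => e (p (e.symm x) (e.symm y)) := by
    funext x y; simp [hp]
  obtain ⟨bs, bp, a1, a2, a3⟩ := h
  refine ⟨?_, ?_, ?_, ?_, ?_⟩
  · rw [es]
    exact bs.comp e.toLinearMap e.symm.toLinearMap e.symm.toLinearMap
  · rw [ep]
    exact bp.comp e.toLinearMap e.symm.toLinearMap e.symm.toLinearMap
  · intro x y z
    simp [es, ep, a1]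
  · intro x y z
    simp [es, ep, a2]
  · intro x y z
    simp [es, ep, a3]

end Transport

/-! ### Recovering a datum from its unified product -/

/-- A bilinear extending datum is determined by its unified product: on pairs from `D × 0` and
`0 × V` all but one summand of each component vanishes, which isolates the twelve maps. -/
theorem datum_ext {D V : Type*} [AddCommGroup D] [Module ℂ D] [AddCommGroup V] [Module ℂ V]
    {s p : D → D → D} (hs : IsBilinear s) (hp : IsBilinear p) {Ω Ω' : ExtendingDatum D V}
    (h : Ω.Bilinear) (h' : Ω'.Bilinear) (es : uSucc s Ω = uSucc s Ω')
    (ep : uPrec p Ω = uPrec p Ω') : Ω = Ω' := by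
  obtain ⟨b1, b2, b3, b4, b5, b6, b7, b8, b9, b10, b11, b12⟩ := h
  obtain ⟨c1, c2, c3, c4, c5, c6, c7, c8, c9, c10, c11, c12⟩ := h'
  have sDV := fun (a : D) (x : V) => congrFun (congrFun es (a, 0)) (0, x)
  have sVD := fun (x : V) (a : D) => congrFun (congrFun es (0, x)) (a, 0)
  have sVV := fun (x y : V) => congrFun (congrFun es (0, x)) (0, y)
  have pDV := fun (a : D) (x : V) => congrFun (congrFun ep (a, 0)) (0, x)
  have pVD := fun (x : V) (a : D) => congrFun (congrFun ep (0, x)) (a, 0)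
  have pVV := fun (x y : V) => congrFun (congrFun ep (0, x)) (0, y)
  simp only [uSucc, uPrec, Prod.mk.injEq,
    hs.zero_left, hs.zero_right, hp.zero_left, hp.zero_right,
    b1.zero_left, b2.zero_left, b3.zero_left, b3.zero_right, b4.zero_left, b4.zero_right,
    b5.zero_left, b5.zero_right, b6.zero_left, b6.zero_right, b7.zero_left, b8.zero_left,
    b9.zero_left, b9.zero_right, b10.zero_left, b10.zero_right, b11.zero_left,
    b11.zero_right, b12.zero_left, b12.zero_right, c1.zero_left, c2.zero_left, c3.zero_left,
    c3.zero_right, c4.zero_left, c4.zero_right, c5.zero_left, c5.zero_right, c6.zero_left,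
    c6.zero_right, c7.zero_left, c8.zero_left, c9.zero_left, c9.zero_right, c10.zero_left,
    c10.zero_right, c11.zero_left, c11.zero_right, c12.zero_left, c12.zero_right, add_zero,
    zero_add] at sDV sVD sVV pDV pVD pVV
  cases Ω
  cases Ω'
  simp only [ExtendingDatum.mk.injEq]
  refine ⟨?_, ?_, ?_, ?_, ?_, ?_, ?_, ?_, ?_, ?_, ?_, ?_⟩ <;> funext u v
  · exact (sDV u v).2
  · exact (pDV u v).2
  · exact (sVD u v).2
  · exact (pVD u v).2
  · exact (sVD u v).1
  · exact (pVD u v).1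
  · exact (sDV u v).1
  · exact (pDV u v).1
  · exact (sVV u v).1
  · exact (pVV u v).1
  · exact (sVV u v).2
  · exact (pVV u v).2

/-! ### The splitting of `E` defined by the retraction -/

section Split

variable {E : Type*} [AddCommGroup E] [Module ℂ E] (D : Submodule ℂ E) (ρ : E →ₗ[ℂ] E)
  (hρD : ∀ u, ρ u ∈ D) (hfix : ∀ a ∈ D, ρ a = a)

/-- The component `u ↦ ρ u` of `E = D ⊕ ker ρ` in `D`, as a linear map. -/
def projD : E →ₗ[ℂ] D := ρ.codRestrict D hρD

/-- The component `u ↦ u - ρ u` of `E = D ⊕ ker ρ` in `ker ρ`, as a linear map. -/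
def projV : E →ₗ[ℂ] LinearMap.ker ρ :=
  (LinearMap.id - ρ).codRestrict (LinearMap.ker ρ) (sub_mem_ker D ρ hρD hfix)

/-- The linear equivalence `u ↦ (ρ u, u - ρ u)` from `E` onto `D × ker ρ`. -/
def split : E ≃ₗ[ℂ] D × LinearMap.ker ρ :=
  LinearEquiv.ofLinearMap ((projD D ρ hρD).prod (projV D ρ hρD hfix))
    (D.subtype.coprod (LinearMap.ker ρ).subtype)
    (by
      apply LinearMap.ext
      rintro ⟨⟨a, ha⟩, ⟨x, hx⟩⟩
      have hx' : ρ x = 0 := hx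
      ext <;> simp [projD, projV, hfix a ha, hx'])
    (by
      ext u
      simp [projD, projV])

theorem split_apply (u : E) :
    split D ρ hρD hfix u =
      (⟨ρ u, hρD u⟩, ⟨u - ρ u, sub_mem_ker D ρ hρD hfix u⟩) := rfl

theorem split_symm_apply (w : D × LinearMap.ker ρ) :
    (split D ρ hρD hfix).symm w = (w.1 : E) + (w.2 : E) := rfl

theorem split_coe (a : D) : split D ρ hρD hfix a = (a, 0) := by
  rw [← LinearEquiv.eq_symm_apply, split_symm_apply]
  simp

theorem split_datumToOps_fst (sD pD : D → D → D) (Ω : ExtendingDatum D (LinearMap.ker ρ))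
    (u v : E) :
    split D ρ hρD hfix ((datumToOps D ρ hρD hfix sD pD Ω).1 u v) =
      uSucc sD Ω (split D ρ hρD hfix u) (split D ρ hρD hfix v) := by
  rw [← LinearEquiv.eq_symm_apply, split_symm_apply]
  simp only [datumToOps, uSucc, split_apply, Submodule.coe_add]
  abel

theorem split_datumToOps_snd (sD pD : D → D → D) (Ω : ExtendingDatum D (LinearMap.ker ρ))
    (u v : E) :
    split D ρ hρD hfix ((datumToOps D ρ hρD hfix sD pD Ω).2 u v) =
      uPrec pD Ω (split D ρ hρD hfix u) (split D ρ hρD hfix v) := by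
  rw [← LinearEquiv.eq_symm_apply, split_symm_apply]
  simp only [datumToOps, uPrec, split_apply, Submodule.coe_add]
  abel

/-- `split` intertwines an operation on `E` extending that of `D` with the unified product of the
canonical datum; only bilinearity is used, not the dendriform axioms. -/
theorem split_canonical_fst {sE pE : E → E → E} {sD : D → D → D} (hb : IsBilinear sE)
    (hr : ∀ a b : D, sE a b = sD a b) (u v : E) :
    split D ρ hρD hfix (sE u v) =
      uSucc sD (canonicalDatum sE pE D ρ hρD hfix) (split D ρ hρD hfix u)
        (split D ρ hρD hfix v) := by
  obtain ⟨w, rfl⟩ := (split D ρ hρD hfix).symm.surjective u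
  obtain ⟨z, rfl⟩ := (split D ρ hρD hfix).symm.surjective v
  obtain ⟨h1, -, h3, -⟩ := hb
  rw [← LinearEquiv.eq_symm_apply, LinearEquiv.apply_symm_apply, LinearEquiv.apply_symm_apply]
  simp only [split_symm_apply, uSucc, canonicalDatum,
    Submodule.coe_add, h1, h3, hr]
  abel

theorem split_canonical_snd {sE pE : E → E → E} {pD : D → D → D} (hb : IsBilinear pE)
    (hr : ∀ a b : D, pE a b = pD a b) (u v : E) :
    split D ρ hρD hfix (pE u v) =
      uPrec pD (canonicalDatum sE pE D ρ hρD hfix) (split D ρ hρD hfix u)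
        (split D ρ hρD hfix v) := by
  obtain ⟨w, rfl⟩ := (split D ρ hρD hfix).symm.surjective u
  obtain ⟨z, rfl⟩ := (split D ρ hρD hfix).symm.surjective v
  obtain ⟨h1, -, h3, -⟩ := hb
  rw [← LinearEquiv.eq_symm_apply, LinearEquiv.apply_symm_apply, LinearEquiv.apply_symm_apply]
  simp only [split_symm_apply, uPrec, canonicalDatum,
    Submodule.coe_add, h1, h3, hr]
  abel

theorem canonicalDatum_bilinear {sE pE : E → E → E} (hs : IsBilinear sE) (hp : IsBilinear pE) :
    (canonicalDatum sE pE D ρ hρD hfix).Bilinear := by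
  let d := projD D ρ hρD
  let v := projV D ρ hρD hfix
  let i := D.subtype
  let j := (LinearMap.ker ρ).subtype
  exact ⟨hs.comp v i j, hp.comp v i j, hs.comp v j i, hp.comp v j i, hs.comp d j i,
    hp.comp d j i, hs.comp d i j, hp.comp d i j, hs.comp d j j, hp.comp d j j,
    hs.comp v j j, hp.comp v j j⟩

theorem datumToOps_isDendriform {sD pD : D → D → D} {Ω : ExtendingDatum D (LinearMap.ker ρ)}
    (hΩ : IsExtendingStructure sD pD Ω) :
    IsDendriform (datumToOps D ρ hρD hfix sD pD Ω).1 (datumToOps D ρ hρD hfix sD pD Ω).2 := by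
  refine hΩ.2.transport (split D ρ hρD hfix).symm (fun x y => ?_) (fun x y => ?_)
  · rw [LinearEquiv.symm_apply_eq, split_datumToOps_fst]
    simp
  · rw [LinearEquiv.symm_apply_eq, split_datumToOps_snd]
    simp

/-- The operations on `E` induced by a bilinear datum restrict to those of `D`, since every
component of the datum vanishes when its argument in `V` is zero. -/
theorem datumToOps_coe {sD pD : D → D → D} {Ω : ExtendingDatum D (LinearMap.ker ρ)}
    (hΩ : Ω.Bilinear) (a b : D) :
    (datumToOps D ρ hρD hfix sD pD Ω).1 a b = sD a b ∧
      (datumToOps D ρ hρD hfix sD pD Ω).2 a b = pD a b := by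
  obtain ⟨b1, b2, b3, b4, b5, b6, b7, b8, b9, b10, b11, b12⟩ := hΩ
  constructor <;> apply (split D ρ hρD hfix).injective
  · simp [split_datumToOps_fst, split_coe, uSucc, b1.zero_right, b3.zero_left, b5.zero_left,
      b7.zero_right, b9.zero_left, b11.zero_left]
  · simp [split_datumToOps_snd, split_coe, uPrec, b2.zero_right, b4.zero_left, b6.zero_left,
      b8.zero_right, b10.zero_left, b12.zero_left]

end Split

/-! ### The two mutually inverse correspondences -/

/-- `Υ₁ : Exts(E,D) → O(D,V)` (the canonical extending datum) and
`Υ₂ : O(D,V) → Exts(E,D)` are well defined and mutually inverse bijections. -/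
theorem exts_equiv_extendingStructures {E : Type*} [AddCommGroup E] [Module ℂ E]
    (D : Submodule ℂ E) (sD pD : ↥D → ↥D → ↥D) (hD : IsDendriform sD pD)
    (ρ : E →ₗ[ℂ] E) (hρD : ∀ u, ρ u ∈ D) (hfix : ∀ a ∈ D, ρ a = a) :
    let Exts : Set ((E → E → E) × (E → E → E)) :=
      {q | IsDendriform q.1 q.2 ∧
        ∀ a b : ↥D, q.1 a.1 b.1 = (sD a b).1 ∧ q.2 a.1 b.1 = (pD a b).1}
    let O : Set (ExtendingDatum ↥D ↥(LinearMap.ker ρ)) :=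
      {Ω | IsExtendingStructure sD pD Ω}
    let Υ₁ : ((E → E → E) × (E → E → E)) → ExtendingDatum ↥D ↥(LinearMap.ker ρ) :=
      fun q => canonicalDatum q.1 q.2 D ρ hρD hfix
    let Υ₂ : ExtendingDatum ↥D ↥(LinearMap.ker ρ) → ((E → E → E) × (E → E → E)) :=
      fun Ω => datumToOps D ρ hρD hfix sD pD Ω
    Set.MapsTo Υ₁ Exts O ∧ Set.MapsTo Υ₂ O Exts ∧
    (∀ q ∈ Exts, Υ₂ (Υ₁ q) = q) ∧ (∀ Ω ∈ O, Υ₁ (Υ₂ Ω) = Ω) := by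
  have maps₁ : ∀ q : (E → E → E) × (E → E → E), (IsDendriform q.1 q.2 ∧
      ∀ a b : ↥D, q.1 a.1 b.1 = (sD a b).1 ∧ q.2 a.1 b.1 = (pD a b).1) →
      IsExtendingStructure sD pD (canonicalDatum q.1 q.2 D ρ hρD hfix) := by
    rintro ⟨sE, pE⟩ ⟨hq, hr⟩
    exact ⟨canonicalDatum_bilinear D ρ hρD hfix hq.1 hq.2.1,
      hq.transport (split D ρ hρD hfix)
        (split_canonical_fst D ρ hρD hfix hq.1 fun a b => (hr a b).1)
        (split_canonical_snd D ρ hρD hfix hq.2.1 fun a b => (hr a b).2)⟩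
  intro Exts O Υ₁ Υ₂
  have maps₂ : Set.MapsTo Υ₂ O Exts := fun Ω hΩ =>
    ⟨datumToOps_isDendriform D ρ hρD hfix hΩ, datumToOps_coe D ρ hρD hfix hΩ.1⟩
  refine ⟨maps₁, maps₂, ?_, ?_⟩
  · rintro ⟨sE, pE⟩ ⟨hq, hr⟩
    apply Prod.ext <;> funext u v <;> apply (split D ρ hρD hfix).injective
    · rw [split_datumToOps_fst]
      exact (split_canonical_fst D ρ hρD hfix hq.1 (fun a b => (hr a b).1) u v).symm
    · rw [split_datumToOps_snd]
      exact (split_canonical_snd D ρ hρD hfix hq.2.1 (fun a b => (hr a b).2) u v).symm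
  · intro Ω hΩ
    obtain ⟨hq, hr⟩ := maps₂ hΩ
    -- Both data have a unified product isomorphic to `Υ₂ Ω` via `split`.
    refine datum_ext hD.1 hD.2.1 (maps₁ _ ⟨hq, hr⟩).1 hΩ.1 ?_ ?_ <;> funext w z
    · obtain ⟨u, rfl⟩ := (split D ρ hρD hfix).surjective w
      obtain ⟨v, rfl⟩ := (split D ρ hρD hfix).surjective z
      exact (split_canonical_fst D ρ hρD hfix hq.1 (fun a b => (hr a b).1) u v).symm.trans
        (split_datumToOps_fst D ρ hρD hfix sD pD Ω u v)
    · obtain ⟨u, rfl⟩ := (split D ρ hρD hfix).surjective w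
      obtain ⟨v, rfl⟩ := (split D ρ hρD hfix).surjective z
      exact (split_canonical_snd D ρ hρD hfix hq.2.1 (fun a b => (hr a b).2) u v).symm.trans
        (split_datumToOps_snd D ρ hρD hfix sD pD Ω u v)

end DendriformES
end
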